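/- Let N ≥ 1, θ ∈ (0,2], p > p_θ := 1 + θ/N, q ∈ ℝ, ε > 0, K > 0, R ∈ (0,1), and α > 1 with αθ/(p-1) < N. Suppose μ : ℝᴺ → [0,∞) satisfies 0 ≤ μ(x) ≤ ε |x|^{-θ/(p-1)} |log|x||^{-q/(p-1)} χ_{B(0,R)}(x) + K for a.e. x ∈ ℝᴺ. Then there exists C > 0 such that sup_{x ∈ ℝᴺ} ( (1/|B(x,σ)|) ∫_{B(x,σ)} μ(y)^α dy )^{1/α} ≤ C ε σ^{-θ/(p-1)} |log σ|^{-q/(p-1)} for all sufficiently small σ > 0. -/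

import Mathlib

open MeasureTheory

/-! In the variable `-log r`, slow variation of the logarithm shows that
`φ r = r ^ (-a) * |log r| ^ (-b)` satisfies, for any `t > a`, the Potter-type bound
`φ r ≤ C * max 1 (σ / r) ^ t * φ σ`, with `C` independent of the scale `σ`. As `φ σ → ∞` when
`σ → 0`, the constant `K` is eventually absorbed into `ε * φ σ`. Taking `t` with `α * t < N`, it
remains to bound the averages of `max 1 (σ / ‖y‖) ^ (α * t)` over balls of radius `σ`: the excess of
this function over `1` is nonnegative and lives on the ball centred at the origin, so that centre is
the worst one, and there the average equals `N / (N - α * t)` at every scale.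
-/

open Set Filter Topology Metric Module Real

section LogSingularity

/-- The profile of a power singularity of order `a` with a logarithmic correction of order `b`, as a
function of the distance `r` to the singular point. -/
noncomputable def logSingularity (a b r : ℝ) : ℝ := r ^ (-a) * |log r| ^ (-b)

lemma logSingularity_nonneg (a b : ℝ) {r : ℝ} (hr : 0 ≤ r) : 0 ≤ logSingularity a b r := by
  unfold logSingularity; positivity

lemma logSingularity_zero {a : ℝ} (ha : a ≠ 0) (b : ℝ) : logSingularity a b 0 = 0 := by
  simp [logSingularity, zero_rpow (neg_ne_zero.2 ha)]

lemma tendsto_logSingularity_nhdsGT_zero {a : ℝ} (ha : 0 < a) (b : ℝ) :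
    Tendsto (logSingularity a b) (𝓝[>] 0) atTop := by
  have hpos : ∀ᶠ r : ℝ in 𝓝[>] 0, 0 < |log r| ^ b / r ^ (-a) := by
    filter_upwards [Ioo_mem_nhdsGT one_pos] with r hr
    have : 0 < |log r| := abs_pos.2 (log_neg hr.1 hr.2).ne
    have : 0 < r := hr.1
    positivity
  have hratio :=
    (isLittleO_abs_log_rpow_rpow_nhdsGT_zero b (neg_lt_zero.2 ha)).tendsto_div_nhds_zero
  refine (tendsto_nhdsWithin_iff.2 ⟨hratio, hpos⟩).inv_tendsto_nhdsGT_zero.congr fun r ↦ ?_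
  rw [Pi.inv_apply, inv_div, div_eq_mul_inv, ← rpow_neg (abs_nonneg _), logSingularity]

lemma exists_div_le_mul_exp {m k : ℝ} (hm : 0 < m) (hk : 0 < k) :
    ∃ C : ℝ, 0 < C ∧ ∀ u v : ℝ, m ≤ v → u / v ≤ C * exp (k * |u - v|) := by
  refine ⟨max 1 (1 / (m * k)), by positivity, fun u v hv ↦ ?_⟩
  have hv0 : 0 < v := hm.trans_le hv
  calc u / v = 1 + (u - v) / v := by field_simp; ring
    _ ≤ 1 + |u - v| / m := by gcongr; exact le_abs_self _
    _ = 1 + 1 / (m * k) * (k * |u - v|) := by field_simp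
    _ ≤ max 1 (1 / (m * k)) + max 1 (1 / (m * k)) * (k * |u - v|) := by
      gcongr
      exacts [le_max_left _ _, le_max_right _ _]
    _ = max 1 (1 / (m * k)) * (k * |u - v| + 1) := by ring
    _ ≤ max 1 (1 / (m * k)) * exp (k * |u - v|) := by gcongr; exact add_one_le_exp _

lemma exists_rpow_le_mul_exp_mul_rpow {m δ : ℝ} (hm : 0 < m) (hδ : 0 < δ) (b : ℝ) :
    ∃ C : ℝ, 0 < C ∧ ∀ u v : ℝ, m ≤ u → m ≤ v → u ^ b ≤ C * exp (δ * |u - v|) * v ^ b := by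
  obtain rfl | hb := eq_or_ne b 0
  · exact ⟨1, one_pos, fun u v _ _ ↦ by simpa using by positivity⟩
  have hb' : 0 < |b| := abs_pos.2 hb
  obtain ⟨C, hC, hdiv⟩ := exists_div_le_mul_exp hm (div_pos hδ hb')
  have hpow : ∀ u v : ℝ, m ≤ u → m ≤ v → (u / v) ^ |b| ≤ C ^ |b| * exp (δ * |u - v|) := by
    intro u v hu hv
    have hu0 : 0 < u := hm.trans_le hu
    have hv0 : 0 < v := hm.trans_le hv
    calc (u / v) ^ |b| ≤ (C * exp (δ / |b| * |u - v|)) ^ |b| := by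
          gcongr
          exact hdiv u v hv
      _ = C ^ |b| * exp (δ * |u - v|) := by
          rw [mul_rpow hC.le (exp_pos _).le, ← exp_mul]
          field_simp
  refine ⟨C ^ |b|, by positivity, fun u v hu hv ↦ ?_⟩
  have hu0 : 0 < u := hm.trans_le hu
  have hv0 : 0 < v := hm.trans_le hv
  rw [← div_le_iff₀ (by positivity), ← div_rpow hu0.le hv0.le]
  rcases abs_choice b with h | h
  · simpa only [h] using hpow u v hu hv
  · calc (u / v) ^ b = (v / u) ^ |b| := by
          rw [h, rpow_neg (by positivity), ← inv_rpow (by positivity), inv_div]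
      _ ≤ C ^ |b| * exp (δ * |v - u|) := hpow v u hv hu
      _ = C ^ |b| * exp (δ * |u - v|) := by rw [abs_sub_comm]

lemma rpow_mul_exp_mul_abs_log_le {a δ t z : ℝ} (hz : 0 < z) (hδa : δ ≤ a) (hat : a + δ ≤ t) :
    z ^ a * exp (δ * |log z|) ≤ max 1 z ^ t := by
  rcases le_total 1 z with h | h
  · calc z ^ a * exp (δ * |log z|) = z ^ (a + δ) := by
          rw [abs_of_nonneg (log_nonneg h), rpow_def_of_pos hz, rpow_def_of_pos hz, ← exp_add]
          ring_nf
      _ ≤ z ^ t := rpow_le_rpow_of_exponent_le h hat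
      _ = max 1 z ^ t := by rw [max_eq_right h]
  · calc z ^ a * exp (δ * |log z|) = z ^ (a - δ) := by
          rw [abs_of_nonpos (log_nonpos hz.le h), rpow_def_of_pos hz, rpow_def_of_pos hz, ← exp_add]
          ring_nf
      _ ≤ 1 := rpow_le_one hz.le h (sub_nonneg.2 hδa)
      _ = max 1 z ^ t := by rw [max_eq_left h, one_rpow]

lemma exists_logSingularity_le {a t R : ℝ} (ha : 0 < a) (hat : a < t) (hR0 : 0 < R) (hR1 : R < 1)
    (b : ℝ) :
    ∃ C : ℝ, 0 < C ∧ ∀ r ∈ Ioc 0 R, ∀ σ ∈ Ioc 0 R,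
      logSingularity a b r ≤ C * max 1 (σ / r) ^ t * logSingularity a b σ := by
  have hlogR : 0 < |log R| := abs_pos.2 (log_neg hR0 hR1).ne
  have habs_log_le : ∀ r ∈ Ioc 0 R, |log R| ≤ |log r| := fun r hr ↦ by
    rw [abs_of_neg (log_neg hR0 hR1), abs_of_neg (log_neg hr.1 (hr.2.trans_lt hR1))]
    exact neg_le_neg (log_le_log hr.1 hr.2)
  have hδ : 0 < min a (t - a) := lt_min ha (sub_pos.2 hat)
  obtain ⟨C, hC, hlog⟩ := exists_rpow_le_mul_exp_mul_rpow hlogR hδ (-b)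
  set δ := min a (t - a)
  refine ⟨C, hC, fun r hr σ hσ ↦ ?_⟩
  have hr0 : 0 < r := hr.1
  have hσ0 : 0 < σ := hσ.1
  have hdist : |(|log r| - |log σ|)| ≤ |log (σ / r)| := by
    rw [log_div hσ0.ne' hr0.ne', abs_sub_comm (log σ)]
    exact abs_abs_sub_abs_le _ _
  calc logSingularity a b r
      ≤ r ^ (-a) * (C * exp (δ * |log (σ / r)|) * |log σ| ^ (-b)) := by
        rw [logSingularity]
        gcongr
        exact (hlog _ _ (habs_log_le r hr) (habs_log_le σ hσ)).trans (by gcongr)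
    _ = C * ((σ / r) ^ a * exp (δ * |log (σ / r)|)) * logSingularity a b σ := by
        rw [logSingularity, div_rpow hσ0.le hr0.le, rpow_neg hr0.le, rpow_neg hσ0.le]
        field_simp
    _ ≤ C * max 1 (σ / r) ^ t * logSingularity a b σ := by
        have := logSingularity_nonneg a b hσ0.le
        gcongr
        exact rpow_mul_exp_mul_abs_log_le (div_pos hσ0 hr0) (min_le_left _ _)
          (by linarith [min_le_right a (t - a)])

end LogSingularity

lemma rpow_le_rpow_mul_rpow_mul {x M w α t : ℝ} (hx : 0 ≤ x) (hM : 0 ≤ M) (hw : 0 ≤ w) (hα : 0 ≤ α)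
    (h : x ≤ M * w ^ t) : x ^ α ≤ M ^ α * w ^ (α * t) := by
  calc x ^ α ≤ (M * w ^ t) ^ α := rpow_le_rpow hx h hα
    _ = M ^ α * w ^ (α * t) := by rw [mul_rpow hM (by positivity), ← rpow_mul hw, mul_comm t]

section BallAverage

variable {E : Type*} [NormedAddCommGroup E] [NormedSpace ℝ E] [FiniteDimensional ℝ E]
  [MeasurableSpace E] [BorelSpace E] (ν : Measure E) [ν.IsAddHaarMeasure]

lemma integrableOn_ball_norm_rpow_neg [Nontrivial E] {s : ℝ} (hs : s < finrank ℝ E) (σ : ℝ) :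
    IntegrableOn (fun y : E ↦ ‖y‖ ^ (-s)) (ball 0 σ) ν := by
  refine integrableOn_ball_of_norm_le_rpow (C := 1) finrank_pos hs (ae_of_all _ fun y ↦ ?_)
    (measurable_norm.pow_const _).aestronglyMeasurable
  rw [one_mul, norm_of_nonneg (by positivity)]

lemma setIntegral_ball_norm_rpow_neg [Nontrivial E] {s σ : ℝ} (hs : s < finrank ℝ E) (hσ : 0 < σ) :
    ∫ y in ball (0 : E) σ, ‖y‖ ^ (-s) ∂ν =
      finrank ℝ E / (finrank ℝ E - s) * σ ^ (-s) * ν.real (ball 0 σ) := by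
  set d := finrank ℝ E
  have hd1 : 1 ≤ d := finrank_pos
  have hradial : ∀ r ∈ Ioi (0 : ℝ), r ^ (d - 1) • (Iio σ).indicator (fun r ↦ r ^ (-s)) r =
      (Iio σ).indicator (fun r ↦ r ^ (d - 1 - s)) r := fun r hr ↦ by
    have hpow : r ^ (d - 1) * r ^ (-s) = r ^ (d - 1 - s) := by
      rw [← rpow_natCast, ← rpow_add hr, Nat.cast_sub hd1, Nat.cast_one, ← sub_eq_add_neg]
    simp only [indicator, smul_eq_mul, mul_ite, mul_zero, hpow]
  calc ∫ y in ball (0 : E) σ, ‖y‖ ^ (-s) ∂ν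
      = ∫ y : E, (Iio σ).indicator (fun r ↦ r ^ (-s)) ‖y‖ ∂ν := by
        rw [← integral_indicator measurableSet_ball]
        refine integral_congr_ae (ae_of_all _ fun y ↦ ?_)
        simp [indicator]
    _ = d • ν.real (ball 0 1) • ∫ r in (0)..σ, r ^ (d - 1 - s) := by
        rw [integral_fun_norm_addHaar, setIntegral_congr_fun measurableSet_Ioi hradial,
          setIntegral_indicator measurableSet_Iio, Ioi_inter_Iio,
          intervalIntegral.integral_of_le hσ.le, integral_Ioc_eq_integral_Ioo]
    _ = d / (d - s) * σ ^ (-s) * ν.real (ball 0 σ) := by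
        have hexp : (d : ℝ) - 1 - s + 1 = d - s := by ring
        have hvol : ν.real (ball (0 : E) σ) = σ ^ d * ν.real (ball 0 1) := by
          rw [measureReal_def, Measure.addHaar_ball_of_pos _ _ hσ, ENNReal.toReal_mul,
            ENNReal.toReal_ofReal (by positivity), measureReal_def]
        rw [integral_rpow (.inl (by linarith)), hexp, zero_rpow (sub_pos.2 hs).ne', sub_zero, hvol,
          sub_eq_add_neg, rpow_add hσ, rpow_natCast, nsmul_eq_mul, smul_eq_mul]
        ring

lemma max_one_div_norm_rpow_sub_one_ae_eq [Nontrivial E] (s : ℝ) {σ : ℝ} (hσ : 0 < σ) :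
    (fun y : E ↦ max 1 (σ / ‖y‖) ^ s - 1) =ᵐ[ν]
      (ball 0 σ).indicator fun y ↦ σ ^ s * ‖y‖ ^ (-s) - 1 := by
  filter_upwards [compl_mem_ae_iff.2 (measure_singleton (0 : E))] with y hy
  have hy0 : 0 < ‖y‖ := norm_pos_iff.2 hy
  by_cases hyσ : y ∈ ball (0 : E) σ
  · have hle : ‖y‖ ≤ σ := (mem_ball_zero_iff.1 hyσ).le
    rw [indicator_of_mem hyσ, max_eq_right ((one_le_div hy0).2 hle), div_rpow hσ.le hy0.le,
      rpow_neg hy0.le, div_eq_mul_inv]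
  · have hle : σ ≤ ‖y‖ := not_lt.1 (mem_ball_zero_iff.not.1 hyσ)
    rw [indicator_of_notMem hyσ, max_eq_left ((div_le_one hy0).2 hle), one_rpow, sub_self]

lemma integrable_max_one_div_norm_rpow_sub_one [Nontrivial E] {s σ : ℝ} (hs : s < finrank ℝ E)
    (hσ : 0 < σ) : Integrable (fun y : E ↦ max 1 (σ / ‖y‖) ^ s - 1) ν := by
  rw [integrable_congr (max_one_div_norm_rpow_sub_one_ae_eq ν s hσ),
    integrable_indicator_iff measurableSet_ball]
  exact ((integrableOn_ball_norm_rpow_neg ν hs σ).const_mul _).sub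
    (integrableOn_const measure_ball_lt_top.ne)

lemma integral_max_one_div_norm_rpow_sub_one [Nontrivial E] {s σ : ℝ} (hs : s < finrank ℝ E)
    (hσ : 0 < σ) :
    ∫ y : E, (max 1 (σ / ‖y‖) ^ s - 1) ∂ν =
      (finrank ℝ E / (finrank ℝ E - s) - 1) * ν.real (ball 0 σ) := by
  rw [integral_congr_ae (max_one_div_norm_rpow_sub_one_ae_eq ν s hσ),
    integral_indicator measurableSet_ball, integral_sub
      ((integrableOn_ball_norm_rpow_neg ν hs σ).const_mul _)
      (integrableOn_const measure_ball_lt_top.ne),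
    integral_const_mul, setIntegral_ball_norm_rpow_neg ν hs hσ, setIntegral_const, smul_eq_mul,
    rpow_neg hσ.le]
  field_simp

lemma integrableOn_ball_max_one_div_norm_rpow [Nontrivial E] {s σ : ℝ} (hs : s < finrank ℝ E)
    (hσ : 0 < σ) (x : E) :
    IntegrableOn (fun y : E ↦ max 1 (σ / ‖y‖) ^ s) (ball x σ) ν := by
  have hone : IntegrableOn (fun _ : E ↦ (1 : ℝ)) (ball x σ) ν :=
    integrableOn_const measure_ball_lt_top.ne
  exact ((integrable_max_one_div_norm_rpow_sub_one ν hs hσ).integrableOn.add hone).congr_fun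
    (fun y _ ↦ sub_add_cancel _ _) measurableSet_ball

lemma setAverage_ball_max_one_div_norm_rpow_le [Nontrivial E] {s σ : ℝ} (hs0 : 0 ≤ s)
    (hs : s < finrank ℝ E) (hσ : 0 < σ) (x : E) :
    ⨍ y in ball x σ, max 1 (σ / ‖y‖) ^ s ∂ν ≤ finrank ℝ E / (finrank ℝ E - s) := by
  have hg := integrable_max_one_div_norm_rpow_sub_one ν hs hσ
  have hg0 : ∀ y : E, 0 ≤ max 1 (σ / ‖y‖) ^ s - 1 := fun y ↦
    sub_nonneg.2 (one_le_rpow (le_max_left _ _) hs0)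
  have hball : 0 < ν.real (ball x σ) :=
    ENNReal.toReal_pos (measure_ball_pos ν x hσ).ne' measure_ball_lt_top.ne
  rw [setAverage_eq, smul_eq_mul, inv_mul_le_iff₀ hball]
  calc ∫ y in ball x σ, max 1 (σ / ‖y‖) ^ s ∂ν
      = ∫ y in ball x σ, (max 1 (σ / ‖y‖) ^ s - 1) ∂ν + ν.real (ball x σ) := by
        rw [integral_sub (integrableOn_ball_max_one_div_norm_rpow ν hs hσ x)
          (integrableOn_const measure_ball_lt_top.ne), setIntegral_const]
        simp
    _ ≤ ∫ y, (max 1 (σ / ‖y‖) ^ s - 1) ∂ν + ν.real (ball x σ) := by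
        grw [setIntegral_le_integral hg (ae_of_all _ hg0)]
    _ = ν.real (ball x σ) * (finrank ℝ E / (finrank ℝ E - s)) := by
        rw [integral_max_one_div_norm_rpow_sub_one ν hs hσ, Measure.addHaar_real_ball_center ν x]
        ring

variable {ν} {f : E → ℝ} {α t M σ : ℝ}

lemma integrableOn_ball_rpow_of_le_mul_max_one_div [Nontrivial E] (hα : 0 ≤ α)
    (hαt : α * t < finrank ℝ E) (hσ : 0 < σ) (hM : 0 ≤ M) (hf : AEMeasurable f ν)
    (hbound : ∀ᵐ y ∂ν, 0 ≤ f y ∧ f y ≤ M * max 1 (σ / ‖y‖) ^ t) (x : E) :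
    IntegrableOn (fun y ↦ f y ^ α) (ball x σ) ν := by
  refine ((integrableOn_ball_max_one_div_norm_rpow ν hαt hσ x).const_mul (M ^ α)).mono'
    (hf.pow_const α).aestronglyMeasurable.restrict (ae_restrict_of_ae ?_)
  filter_upwards [hbound] with y ⟨hy0, hy⟩
  rw [norm_of_nonneg (rpow_nonneg hy0 _)]
  exact rpow_le_rpow_mul_rpow_mul hy0 hM (by positivity) hα hy

lemma setAverage_ball_rpow_rpow_le_of_le_mul_max_one_div [Nontrivial E] (hα : 0 < α) (ht : 0 ≤ t)
    (hαt : α * t < finrank ℝ E) (hσ : 0 < σ) (hM : 0 ≤ M)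
    (hbound : ∀ᵐ y ∂ν, 0 ≤ f y ∧ f y ≤ M * max 1 (σ / ‖y‖) ^ t) (x : E) :
    (⨍ y in ball x σ, f y ^ α ∂ν) ^ (1 / α) ≤
      (finrank ℝ E / (finrank ℝ E - α * t)) ^ (1 / α) * M := by
  have hball : ∀ᵐ y ∂ν.restrict (ball x σ), 0 ≤ f y ^ α ∧
      f y ^ α ≤ M ^ α * max 1 (σ / ‖y‖) ^ (α * t) :=
    ae_restrict_of_ae <| hbound.mono fun y hy ↦ ⟨rpow_nonneg hy.1 _,
      rpow_le_rpow_mul_rpow_mul hy.1 hM (by positivity) hα.le hy.2⟩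
  have hconst : (0 : ℝ) ≤ finrank ℝ E / (finrank ℝ E - α * t) :=
    div_nonneg (Nat.cast_nonneg _) (sub_nonneg.2 hαt.le)
  have hnonneg : 0 ≤ ⨍ y in ball x σ, f y ^ α ∂ν :=
    integral_nonneg_of_ae (Measure.ae_smul_measure (hball.mono fun y hy ↦ hy.1) _)
  have havg : ⨍ y in ball x σ, f y ^ α ∂ν ≤
      M ^ α * (finrank ℝ E / (finrank ℝ E - α * t)) := by
    calc ⨍ y in ball x σ, f y ^ α ∂ν
        ≤ ⨍ y in ball x σ, M ^ α * max 1 (σ / ‖y‖) ^ (α * t) ∂ν := by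
          simp only [setAverage_eq, smul_eq_mul]
          refine mul_le_mul_of_nonneg_left ?_ (by positivity)
          exact integral_mono_of_nonneg (hball.mono fun y hy ↦ hy.1)
            ((integrableOn_ball_max_one_div_norm_rpow ν hαt hσ x).const_mul _)
            (hball.mono fun y hy ↦ hy.2)
      _ = M ^ α * ⨍ y in ball x σ, max 1 (σ / ‖y‖) ^ (α * t) ∂ν := integral_const_mul _ _
      _ ≤ _ := by
          gcongr
          exact setAverage_ball_max_one_div_norm_rpow_le ν (by positivity) hαt hσ x
  calc (⨍ y in ball x σ, f y ^ α ∂ν) ^ (1 / α)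
      ≤ (M ^ α * (finrank ℝ E / (finrank ℝ E - α * t))) ^ (1 / α) := by gcongr
    _ = _ := by
        rw [mul_rpow (by positivity) hconst, ← rpow_mul hM, mul_one_div_cancel hα.ne', rpow_one,
          mul_comm]

end BallAverage

lemma exists_eventually_le_mul_max_one_div {E : Type*} [NormedAddCommGroup E] {a t R : ℝ}
    (ha : 0 < a) (hat : a < t) (hR0 : 0 < R) (hR1 : R < 1) (b : ℝ) :
    ∃ C : ℝ, 0 < C ∧ ∀ ε K : ℝ, 0 < ε → ∀ᶠ σ in 𝓝[>] 0, ∀ y : E,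
      ε * logSingularity a b ‖y‖ * (ball (0 : E) R).indicator (fun _ ↦ (1 : ℝ)) y + K ≤
        C * ε * logSingularity a b σ * max 1 (σ / ‖y‖) ^ t := by
  obtain ⟨C, hC, hpotter⟩ := exists_logSingularity_le ha hat hR0 hR1 b
  refine ⟨C + 1, by positivity, fun ε K hε ↦ ?_⟩
  filter_upwards [Ioc_mem_nhdsGT hR0,
    (tendsto_logSingularity_nhdsGT_zero ha b).eventually_ge_atTop (K / ε)] with σ hσ hK y
  have hφσ : 0 ≤ logSingularity a b σ := logSingularity_nonneg a b hσ.1.le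
  have hmax : 1 ≤ max 1 (σ / ‖y‖) ^ t := one_le_rpow (le_max_left _ _) (ha.trans hat).le
  have hsingular : logSingularity a b ‖y‖ * (ball (0 : E) R).indicator (fun _ ↦ (1 : ℝ)) y ≤
      C * max 1 (σ / ‖y‖) ^ t * logSingularity a b σ := by
    by_cases hy : y ∈ ball (0 : E) R
    · rw [indicator_of_mem hy, mul_one]
      obtain hy0 | hy0 := (norm_nonneg y).eq_or_lt
      · rw [← hy0, logSingularity_zero ha.ne']
        positivity
      · exact hpotter _ ⟨hy0, (mem_ball_zero_iff.1 hy).le⟩ σ hσ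
    · rw [indicator_of_notMem hy, mul_zero]
      positivity
  have hconst : K ≤ ε * logSingularity a b σ * max 1 (σ / ‖y‖) ^ t :=
    ((div_le_iff₀' hε).1 hK).trans (le_mul_of_one_le_right (by positivity) hmax)
  calc ε * logSingularity a b ‖y‖ * (ball (0 : E) R).indicator (fun _ ↦ (1 : ℝ)) y + K
      ≤ ε * (C * max 1 (σ / ‖y‖) ^ t * logSingularity a b σ) +
        ε * logSingularity a b σ * max 1 (σ / ‖y‖) ^ t := by
        rw [mul_assoc]
        gcongr
    _ = (C + 1) * ε * logSingularity a b σ * max 1 (σ / ‖y‖) ^ t := by ring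

theorem stmt_18_general {E : Type*} [NormedAddCommGroup E] [NormedSpace ℝ E]
    [FiniteDimensional ℝ E] [MeasurableSpace E] [BorelSpace E] (ν : Measure E)
    [ν.IsAddHaarMeasure] {a R α : ℝ} (ha : 0 < a) (hR0 : 0 < R) (hR1 : R < 1) (hα : 0 < α)
    (hαa : α * a < finrank ℝ E) (b : ℝ) :
    ∃ C : ℝ, 0 < C ∧ ∀ (ε K : ℝ) (f : E → ℝ), 0 < ε → AEMeasurable f ν →
      (∀ᵐ y ∂ν, 0 ≤ f y ∧ f y ≤ ε * logSingularity a b ‖y‖ *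
        (ball (0 : E) R).indicator (fun _ ↦ (1 : ℝ)) y + K) →
      ∀ᶠ σ in 𝓝[>] 0, ∀ x, IntegrableOn (fun y ↦ f y ^ α) (ball x σ) ν ∧
        (⨍ y in ball x σ, f y ^ α ∂ν) ^ (1 / α) ≤ C * ε * logSingularity a b σ := by
  have hd : (0 : ℝ) < finrank ℝ E := (mul_pos hα ha).trans hαa
  have : Nontrivial E := nontrivial_of_finrank_pos (Nat.cast_pos.1 hd)
  obtain ⟨t, hat, htd⟩ := exists_between ((lt_div_iff₀' hα).2 hαa)
  have hαt : α * t < finrank ℝ E := (lt_div_iff₀' hα).1 htd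
  obtain ⟨C, hC, hmajorant⟩ := exists_eventually_le_mul_max_one_div (E := E) ha hat hR0 hR1 b
  have hA : 0 < (finrank ℝ E / (finrank ℝ E - α * t) : ℝ) := div_pos hd (sub_pos.2 hαt)
  refine ⟨(finrank ℝ E / (finrank ℝ E - α * t)) ^ (1 / α) * C,
    mul_pos (rpow_pos_of_pos hA _) hC, fun ε K f hε hf hbound ↦ ?_⟩
  filter_upwards [hmajorant ε K hε, self_mem_nhdsWithin] with σ hσ (hσ0 : 0 < σ) x
  have hM : 0 ≤ C * ε * logSingularity a b σ :=
    mul_nonneg (by positivity) (logSingularity_nonneg a b hσ0.le)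
  have hle := hbound.mono fun y hy ↦ And.intro hy.1 (hy.2.trans (hσ y))
  refine ⟨integrableOn_ball_rpow_of_le_mul_max_one_div hα.le hαt hσ0 hM hf hle x, ?_⟩
  simpa only [mul_assoc] using setAverage_ball_rpow_rpow_le_of_le_mul_max_one_div hα
    (ha.trans hat).le hαt hσ0 hM hle x

theorem stmt_18 (N : ℕ) (hN : 1 ≤ N) (θ : ℝ) (hθ0 : 0 < θ) (hθ2 : θ ≤ 2)
    (p q ε K R α : ℝ) (hp : 1 + θ / N < p) (hε : 0 < ε) (hK : 0 < K)
    (hR0 : 0 < R) (hR1 : R < 1) (hα : 1 < α) (hαθ : α * θ / (p - 1) < N)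
    (μ : EuclideanSpace ℝ (Fin N) → ℝ) (hμ : Measurable μ)
    (hbound : ∀ᵐ x : EuclideanSpace ℝ (Fin N),
      0 ≤ μ x ∧ μ x ≤ ε * ‖x‖ ^ (-θ/(p-1)) * |Real.log ‖x‖| ^ (-q/(p-1)) *
        (Metric.ball (0 : EuclideanSpace ℝ (Fin N)) R).indicator (fun _ => (1:ℝ)) x + K) :
    ∃ C : ℝ, 0 < C ∧ ∃ σ₀ : ℝ, 0 < σ₀ ∧ ∀ σ : ℝ, 0 < σ → σ < σ₀ →
      ∀ x : EuclideanSpace ℝ (Fin N),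
        (⨍ y in Metric.ball x σ, μ y ^ α) ^ (1/α) ≤
          C * ε * σ ^ (-θ/(p-1)) * |Real.log σ| ^ (-q/(p-1)) := by
  have hp1 : 0 < p - 1 := by linarith [show 0 ≤ θ / N by positivity]
  obtain ⟨C, hC, hmean⟩ := stmt_18_general (volume : Measure (EuclideanSpace ℝ (Fin N)))
    (div_pos hθ0 hp1) hR0 hR1 (zero_lt_one.trans hα)
    (by rwa [finrank_euclideanSpace_fin, ← mul_div_assoc]) (q / (p - 1))
  have hsmall := hmean ε K μ hε hμ.aemeasurable
    (by simpa only [logSingularity, neg_div, mul_assoc] using hbound)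
  obtain ⟨σ₀, hσ₀, hball⟩ := mem_nhdsGT_iff_exists_Ioo_subset.1 hsmall
  refine ⟨C, hC, σ₀, hσ₀, fun σ hσ hσσ₀ x ↦ ?_⟩
  simpa only [logSingularity, neg_div, mul_assoc] using (hball ⟨hσ, hσσ₀⟩ x).2
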